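/- Let X be a type, H a real inner product space, κ > 0, and ev : H →ₗ[ℝ] (X → ℝ) a linear map satisfying |ev f x| ≤ κ·‖f‖ for all f ∈ H, x ∈ X. Let n ≥ 1, (x₁,y₁),…,(xₙ,yₙ) ∈ X × ℝ with |yₖ| ≤ C_y for all k, λ > 0, m ≥ 2 a real number, and fix i with 1 ≤ i ≤ n. Suppose f_Z minimizes over H the objective J_Z(f) = (1/n)·Σₖ₌₁ⁿ (yₖ − ev f xₖ)² + λ·‖f‖^m, and f_{Z^i} minimizes over H the objective J_{Z^i}(f) = (1/n)·Σ_{k≠i} (yₖ − ev f xₖ)² + λ·‖f‖^m. Then the m-power regularized least squares regression algorithm is β-uniformly stable with β = C·κ·(2^(m−2)·C·κ/(λ·n))^(1/(m−1)), where C = 2·(C_y + κ·(C_y²/λ)^(1/m)): for every x ∈ X and every y ∈ ℝ with |y| ≤ C_y, |(y − ev f_Z x)² − (y − ev f_{Z^i} x)²| ≤ C·κ·(2^(m−2)·C·κ/(λ·n))^(1/(m−1)). -/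

import Mathlib

/-!
Compare both minimizers with their midpoint `h`. Adding the two minimality inequalities, the convex
part of the risk shared by `f_Z` and `f_{Z^i}` drops out, leaving only the loss at the removed
example, which changes by `O(‖f_Z - h‖)`. On the other side, the parallelogram law makes the gap
`‖f_Z‖ ^ m + ‖f_{Z^i}‖ ^ m - 2 ‖h‖ ^ m` at least of order `‖f_Z - f_{Z^i}‖ ^ m`. Since `m > 1`,
this bounds `‖f_Z - f_{Z^i}‖`, and the quadratic loss is Lipschitz on the ball containing both
minimizers.
-/

open Finset

section RealInequalities

theorem le_rpow_of_mul_rpow_le_mul {a b d m : ℝ} (ha : 0 < a) (hb : 0 ≤ b) (hd : 0 ≤ d)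
    (hm : 1 < m) (h : a * d ^ m ≤ b * d) : d ≤ (b / a) ^ (1 / (m - 1)) := by
  obtain rfl | hd_pos := hd.eq_or_lt
  · positivity
  have hpow : d ^ m = d ^ (m - 1) * d := by
    rw [← Real.rpow_add_one hd_pos.ne', sub_add_cancel]
  have hcancel : a * d ^ (m - 1) ≤ b :=
    le_of_mul_le_mul_right (by rwa [mul_assoc, ← hpow]) hd_pos
  rw [one_div, Real.le_rpow_inv_iff_of_pos hd (by positivity) (sub_pos.2 hm), le_div_iff₀' ha]
  exact hcancel

theorem abs_sq_sub_sq_le {a b B : ℝ} (ha : |a| ≤ B) (hb : |b| ≤ B) :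
    |a ^ 2 - b ^ 2| ≤ 2 * B * |a - b| := by
  rw [sq_sub_sq, abs_mul]
  gcongr
  linarith [abs_add_le a b]

theorem one_div_mul_card_finset_fin_le_one {n : ℕ} (s : Finset (Fin n)) :
    1 / (n : ℝ) * #s ≤ 1 := by
  rw [one_div_mul_eq_div]
  exact div_le_one_of_le₀ (Nat.cast_le.2 (card_finset_fin_le s)) n.cast_nonneg

end RealInequalities

section RegularizedRisk

/-- The `m`-power regularization `R f + lam * ‖f‖ ^ m` of a risk functional `R`, the objective that
the learning algorithm minimizes. -/
noncomputable def regularizedRisk {E : Type*} [Norm E] (R : E → ℝ) (lam m : ℝ) (f : E) : ℝ :=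
  R f + lam * ‖f‖ ^ m

theorem norm_le_of_regularizedRisk_le_zero {E : Type*} [SeminormedAddCommGroup E] {R : E → ℝ}
    {lam m c : ℝ} {f : E} (hlam : 0 < lam) (hm : 0 < m) (hRf : 0 ≤ R f) (hR0 : R 0 ≤ c)
    (hf : regularizedRisk R lam m f ≤ regularizedRisk R lam m 0) :
    ‖f‖ ≤ (c / lam) ^ (1 / m) := by
  simp only [regularizedRisk, norm_zero, Real.zero_rpow hm.ne', mul_zero, add_zero] at hf
  have hpow : ‖f‖ ^ m ≤ c / lam := (le_div_iff₀' hlam).2 (by linarith)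
  have hc : 0 ≤ c / lam := (Real.rpow_nonneg (norm_nonneg f) m).trans hpow
  rwa [one_div, Real.le_rpow_inv_iff_of_pos (norm_nonneg f) hc hm]

variable {E : Type*} [SeminormedAddCommGroup E] [InnerProductSpace ℝ E]

theorem norm_midpoint_sq_add_half_norm_sub_sq (f g : E) :
    ‖midpoint ℝ f g‖ ^ 2 + (‖f - g‖ / 2) ^ 2 = 1 / 2 * ‖f‖ ^ 2 + 1 / 2 * ‖g‖ ^ 2 := by
  have hmid : ‖midpoint ℝ f g‖ = ‖f + g‖ / 2 := by
    rw [midpoint_eq_smul_add, norm_smul, invOf_eq_inv, norm_inv, Real.norm_two, inv_mul_eq_div]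
  rw [hmid]
  linarith [parallelogram_law_with_norm ℝ f g]

/-- Clarkson's inequality in an inner product space, where it follows from the parallelogram law by
superadditivity and convexity of `t ↦ t ^ (m / 2)`. -/
theorem two_mul_norm_midpoint_rpow_add_le {m : ℝ} (hm : 2 ≤ m) (f g : E) :
    2 * ‖midpoint ℝ f g‖ ^ m + 2 * (‖f - g‖ / 2) ^ m ≤ ‖f‖ ^ m + ‖g‖ ^ m := by
  have hm' : 1 ≤ m / 2 := by linarith
  have rpow_eq {a : ℝ} (ha : 0 ≤ a) : a ^ m = (a ^ 2) ^ (m / 2) := by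
    rw [← Real.rpow_natCast_mul ha, Nat.cast_ofNat, mul_div_cancel₀ m two_ne_zero]
  have hsuper := Real.add_rpow_le_rpow_add (sq_nonneg ‖midpoint ℝ f g‖)
    (sq_nonneg (‖f - g‖ / 2)) hm'
  have hconvex := (convexOn_rpow hm').2 (Set.mem_Ici.2 (sq_nonneg ‖f‖))
    (Set.mem_Ici.2 (sq_nonneg ‖g‖)) one_half_pos.le one_half_pos.le (add_halves 1)
  simp only [smul_eq_mul] at hconvex
  rw [norm_midpoint_sq_add_half_norm_sub_sq] at hsuper
  rw [rpow_eq (norm_nonneg f), rpow_eq (norm_nonneg g), rpow_eq (norm_nonneg (midpoint ℝ f g)),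
    rpow_eq (by positivity : 0 ≤ ‖f - g‖ / 2)]
  linarith

variable {R P : E → ℝ} {lam m L : ℝ} {f g : E}

theorem two_mul_half_norm_sub_rpow_le_of_isMinOn (hR : ConvexOn ℝ Set.univ R) (hlam : 0 ≤ lam)
    (hm : 2 ≤ m) (hf : IsMinOn (regularizedRisk (R + P) lam m) Set.univ f)
    (hg : IsMinOn (regularizedRisk R lam m) Set.univ g) :
    2 * lam * (‖f - g‖ / 2) ^ m ≤ P (midpoint ℝ f g) - P f := by
  have hf_mid := isMinOn_univ_iff.1 hf (midpoint ℝ f g)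
  have hg_mid := isMinOn_univ_iff.1 hg (midpoint ℝ f g)
  have hR_mid : R (midpoint ℝ f g) ≤ 1 / 2 * R f + 1 / 2 * R g := by
    have h := hR.2 (Set.mem_univ f) (Set.mem_univ g) one_half_pos.le one_half_pos.le (add_halves 1)
    simpa only [midpoint_eq_smul_add, invOf_eq_inv, smul_add, smul_eq_mul, one_div] using h
  have hclarkson := mul_le_mul_of_nonneg_left (two_mul_norm_midpoint_rpow_add_le hm f g) hlam
  simp only [regularizedRisk, Pi.add_apply] at hf_mid hg_mid
  linarith

theorem norm_sub_le_of_isMinOn_regularizedRisk (hR : ConvexOn ℝ Set.univ R) (hlam : 0 < lam)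
    (hm : 2 ≤ m) (hL : 0 ≤ L)
    (hP : P (midpoint ℝ f g) - P f ≤ L * ‖midpoint ℝ f g - f‖)
    (hf : IsMinOn (regularizedRisk (R + P) lam m) Set.univ f)
    (hg : IsMinOn (regularizedRisk R lam m) Set.univ g) :
    ‖f - g‖ ≤ (2 ^ (m - 2) * L / lam) ^ (1 / (m - 1)) := by
  have hmid : ‖midpoint ℝ f g - f‖ = ‖f - g‖ / 2 := by
    rw [← dist_eq_norm, dist_midpoint_left, dist_eq_norm, Real.norm_two, inv_mul_eq_div]
  have hbound : 2 * lam / 2 ^ m * ‖f - g‖ ^ m ≤ L / 2 * ‖f - g‖ :=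
    calc 2 * lam / 2 ^ m * ‖f - g‖ ^ m = 2 * lam * (‖f - g‖ / 2) ^ m := by
          rw [Real.div_rpow (norm_nonneg _) zero_le_two]; ring
      _ ≤ P (midpoint ℝ f g) - P f := two_mul_half_norm_sub_rpow_le_of_isMinOn hR hlam.le hm hf hg
      _ ≤ L * (‖f - g‖ / 2) := hmid ▸ hP
      _ = L / 2 * ‖f - g‖ := by ring
  have hconst : L / 2 / (2 * lam / 2 ^ m) = 2 ^ (m - 2) * L / lam := by
    rw [Real.rpow_sub two_pos, Real.rpow_two]
    field_simp
  rw [← hconst]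
  exact le_rpow_of_mul_rpow_le_mul (by positivity) (by positivity) (norm_nonneg _) (by linarith)
    hbound

end RegularizedRisk

section SquareLoss

variable {ι E : Type*}

/-- The empirical risk for the square loss of a hypothesis `f` on the examples indexed by `s`, with
weight `w` on each. The functional `φ k` is evaluation at the `k`-th input and `y k` is its label;
`w` is independent of `s`, so that removing an example keeps the normalization. -/
def squareRisk [AddCommGroup E] [Module ℝ E] (φ : ι → E →ₗ[ℝ] ℝ) (y : ι → ℝ) (w : ℝ)
    (s : Finset ι) (f : E) : ℝ :=
  w * ∑ k ∈ s, (y k - φ k f) ^ 2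

section Module

variable [AddCommGroup E] [Module ℝ E] {φ : ι → E →ₗ[ℝ] ℝ} {y : ι → ℝ} {w c : ℝ} {s : Finset ι}

theorem squareRisk_nonneg (hw : 0 ≤ w) (f : E) : 0 ≤ squareRisk φ y w s f :=
  mul_nonneg hw (sum_nonneg fun _ _ => sq_nonneg _)

theorem squareRisk_erase_add_singleton [DecidableEq ι] {i : ι} (hi : i ∈ s) :
    squareRisk φ y w (s.erase i) + squareRisk φ y w {i} = squareRisk φ y w s := by
  funext f
  simp only [squareRisk, Pi.add_apply, sum_singleton, ← mul_add, sum_erase_add _ _ hi]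

theorem squareRisk_zero_le (hw : 0 ≤ w) (hy : ∀ k ∈ s, |y k| ≤ c) :
    squareRisk φ y w s 0 ≤ w * #s * c ^ 2 := by
  have hsum : ∑ k ∈ s, y k ^ 2 ≤ #s • c ^ 2 :=
    sum_le_card_nsmul _ _ _ fun k hk => sq_le_sq' (abs_le.1 (hy k hk)).1 (abs_le.1 (hy k hk)).2
  simp only [squareRisk, map_zero, sub_zero]
  rw [mul_assoc, ← nsmul_eq_mul]
  exact mul_le_mul_of_nonneg_left hsum hw

theorem convexOn_squareRisk (hw : 0 ≤ w) : ConvexOn ℝ Set.univ (squareRisk φ y w s) := by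
  refine ⟨convex_univ, fun f _ g _ a b ha hb hab => ?_⟩
  have hloss (k : ι) : (y k - φ k (a • f + b • g)) ^ 2 ≤
      a * (y k - φ k f) ^ 2 + b * (y k - φ k g) ^ 2 := by
    have hcomb : y k - φ k (a • f + b • g) = a * (y k - φ k f) + b * (y k - φ k g) := by
      simp only [map_add, map_smul, smul_eq_mul]
      linear_combination -y k * hab
    rw [hcomb]
    exact even_two.convexOn_pow.2 (Set.mem_univ _) (Set.mem_univ _) ha hb hab
  calc squareRisk φ y w s (a • f + b • g)
      ≤ w * ∑ k ∈ s, (a * (y k - φ k f) ^ 2 + b * (y k - φ k g) ^ 2) :=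
        mul_le_mul_of_nonneg_left (sum_le_sum fun k _ => hloss k) hw
    _ = a • squareRisk φ y w s f + b • squareRisk φ y w s g := by
        simp only [squareRisk, sum_add_distrib, ← mul_sum, smul_eq_mul]
        ring

end Module

theorem norm_le_of_isMinOn_regularizedRisk_squareRisk [SeminormedAddCommGroup E] [Module ℝ E]
    {φ : ι → E →ₗ[ℝ] ℝ} {y : ι → ℝ} {w c lam m : ℝ} {s : Finset ι} {f : E} (hw : 0 ≤ w)
    (hs : w * #s ≤ 1) (hy : ∀ k ∈ s, |y k| ≤ c) (hlam : 0 < lam) (hm : 0 < m)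
    (hf : IsMinOn (regularizedRisk (squareRisk φ y w s) lam m) Set.univ f) :
    ‖f‖ ≤ (c ^ 2 / lam) ^ (1 / m) :=
  norm_le_of_regularizedRisk_le_zero hlam hm (squareRisk_nonneg hw f)
    ((squareRisk_zero_le hw hy).trans (mul_le_of_le_one_left (sq_nonneg c) hs))
    (isMinOn_univ_iff.1 hf 0)

theorem abs_sq_sub_apply_sub_sq_sub_apply_le [SeminormedAddCommGroup E] [Module ℝ E]
    {φ : E →ₗ[ℝ] ℝ} {κ c r u : ℝ} {f g : E} (hκ : 0 ≤ κ) (hφ : ∀ h, |φ h| ≤ κ * ‖h‖)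
    (hu : |u| ≤ c) (hf : ‖f‖ ≤ r) (hg : ‖g‖ ≤ r) :
    |(u - φ f) ^ 2 - (u - φ g) ^ 2| ≤ 2 * (c + κ * r) * κ * ‖f - g‖ := by
  have hresidual {h : E} (hh : ‖h‖ ≤ r) : |u - φ h| ≤ c + κ * r :=
    (abs_sub _ _).trans (add_le_add hu ((hφ h).trans (mul_le_mul_of_nonneg_left hh hκ)))
  have hradius : 0 ≤ c + κ * r := (abs_nonneg _).trans (hresidual hf)
  calc |(u - φ f) ^ 2 - (u - φ g) ^ 2|
      ≤ 2 * (c + κ * r) * |(u - φ f) - (u - φ g)| :=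
        abs_sq_sub_sq_le (hresidual hf) (hresidual hg)
    _ = 2 * (c + κ * r) * |φ (f - g)| := by rw [sub_sub_sub_cancel_left, abs_sub_comm, map_sub]
    _ ≤ 2 * (c + κ * r) * (κ * ‖f - g‖) := by gcongr; exact hφ _
    _ = 2 * (c + κ * r) * κ * ‖f - g‖ := (mul_assoc _ _ _).symm

theorem norm_sub_le_of_isMinOn_regularizedRisk_squareRisk_erase [SeminormedAddCommGroup E]
    [InnerProductSpace ℝ E] [DecidableEq ι] {φ : ι → E →ₗ[ℝ] ℝ} {y : ι → ℝ}
    {w κ c r lam m : ℝ} {s : Finset ι} {i : ι} {f g : E} (hi : i ∈ s) (hw : 0 ≤ w) (hκ : 0 ≤ κ)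
    (hφ : ∀ h, |φ i h| ≤ κ * ‖h‖) (hy : |y i| ≤ c) (hlam : 0 < lam) (hm : 2 ≤ m)
    (hf_norm : ‖f‖ ≤ r) (hg_norm : ‖g‖ ≤ r)
    (hf : IsMinOn (regularizedRisk (squareRisk φ y w s) lam m) Set.univ f)
    (hg : IsMinOn (regularizedRisk (squareRisk φ y w (s.erase i)) lam m) Set.univ g) :
    ‖f - g‖ ≤ (2 ^ (m - 2) * (w * (2 * (c + κ * r) * κ)) / lam) ^ (1 / (m - 1)) := by
  have hc : 0 ≤ c := (abs_nonneg _).trans hy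
  have hr : 0 ≤ r := (norm_nonneg f).trans hf_norm
  have hmid_norm : ‖midpoint ℝ f g‖ ≤ r := by
    simpa only [mem_closedBall_zero_iff] using (convex_closedBall (0 : E) r).midpoint_mem
      (mem_closedBall_zero_iff.2 hf_norm) (mem_closedBall_zero_iff.2 hg_norm)
  have hloss := (le_abs_self _).trans
    (abs_sq_sub_apply_sub_sq_sub_apply_le hκ hφ hy hmid_norm hf_norm)
  rw [← squareRisk_erase_add_singleton hi] at hf
  refine norm_sub_le_of_isMinOn_regularizedRisk (convexOn_squareRisk hw) hlam hm (by positivity)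
    ?_ hf hg
  simp only [squareRisk, sum_singleton]
  rw [← mul_sub, mul_assoc w]
  exact mul_le_mul_of_nonneg_left hloss hw

end SquareLoss

theorem mrlsr_uniform_stability
    {X H : Type*} [NormedAddCommGroup H] [InnerProductSpace ℝ H]
    (κ : ℝ) (hκ : 0 < κ)
    (ev : H →ₗ[ℝ] (X → ℝ))
    (hev : ∀ (f : H) (x : X), |ev f x| ≤ κ * ‖f‖)
    (n : ℕ) (hn : 1 ≤ n) (x : Fin n → X) (y : Fin n → ℝ) (Cy : ℝ)
    (hy : ∀ k, |y k| ≤ Cy)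
    (lam m : ℝ) (hlam : 0 < lam) (hm : 2 ≤ m)
    (i : Fin n) (fZ fZi : H)
    (hfZ : ∀ f : H,
      (1 / n) * (∑ k, (y k - ev fZ (x k)) ^ 2) + lam * ‖fZ‖ ^ m ≤
        (1 / n) * (∑ k, (y k - ev f (x k)) ^ 2) + lam * ‖f‖ ^ m)
    (hfZi : ∀ f : H,
      (1 / n) * (∑ k ∈ Finset.univ.erase i, (y k - ev fZi (x k)) ^ 2) + lam * ‖fZi‖ ^ m ≤
        (1 / n) * (∑ k ∈ Finset.univ.erase i, (y k - ev f (x k)) ^ 2) + lam * ‖f‖ ^ m)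
    (C : ℝ) (hC : C = 2 * (Cy + κ * (Cy ^ 2 / lam) ^ (1 / m))) :
    ∀ (x' : X) (y' : ℝ), |y'| ≤ Cy →
      |(y' - ev fZ x') ^ 2 - (y' - ev fZi x') ^ 2| ≤
        C * κ * ((2 : ℝ) ^ (m - 2) * C * κ / (lam * n)) ^ (1 / (m - 1)) := by
  intro x' y' hy'
  let φ (t : X) : H →ₗ[ℝ] ℝ := LinearMap.proj t ∘ₗ ev
  have hCy : 0 ≤ Cy := (abs_nonneg _).trans hy'
  have hw : 0 ≤ 1 / (n : ℝ) := by positivity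
  have hZ : IsMinOn (regularizedRisk (squareRisk (φ ∘ x) y (1 / n) univ) lam m) Set.univ fZ :=
    isMinOn_univ_iff.2 hfZ
  have hZi : IsMinOn (regularizedRisk (squareRisk (φ ∘ x) y (1 / n) (univ.erase i)) lam m)
      Set.univ fZi := isMinOn_univ_iff.2 hfZi
  have hnorm {s : Finset (Fin n)} {f : H}
      (hf : IsMinOn (regularizedRisk (squareRisk (φ ∘ x) y (1 / n) s) lam m) Set.univ f) :
      ‖f‖ ≤ (Cy ^ 2 / lam) ^ (1 / m) :=
    norm_le_of_isMinOn_regularizedRisk_squareRisk hw (one_div_mul_card_finset_fin_le_one s)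
      (fun k _ => hy k) hlam (by linarith) hf
  have hdist := norm_sub_le_of_isMinOn_regularizedRisk_squareRisk_erase (mem_univ i) hw hκ.le
    (fun f => hev f (x i)) (hy i) hlam hm (hnorm hZ) (hnorm hZi) hZ hZi
  have hloss := abs_sq_sub_apply_sub_sq_sub_apply_le (φ := φ x') hκ.le (fun f => hev f x') hy'
    (hnorm hZ) (hnorm hZi)
  rw [← hC] at hdist hloss
  have hC_nonneg : 0 ≤ C := by rw [hC]; positivity
  refine hloss.trans (mul_le_mul_of_nonneg_left (hdist.trans_eq ?_) (by positivity))
  congr 1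
  ring
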